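/- arXiv:2211.03289 — 11 statements merged into one kernel-verified Lean document; each statement's English description precedes it below -/
import Mathlib

section
/- Let n, r ≥ 0 and let Γ : [n+r] → [n] × [r] be a monotone map (where [n+r] = Fin(n+r+1) and [n] × [r] carries the componentwise order). If Γ is injective, then the composite fst ∘ Γ : [n+r] → [n] is surjective. -/
/-! A nonempty finite chain in a product of two partial orders has fewer elements than it has first
coordinates and second coordinates together: passing to the greatest element of the chain from the
elements below it always produces a new first coordinate or a new second coordinate. A chain of
`n + r + 1` elements in `[n] × [r]` has at most `r + 1` second coordinates, so it has at least
`n + 1` first coordinates, which is all of them. -/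

section ChainsInProducts

variable {α β : Type*} [PartialOrder α] [PartialOrder β]

theorem fst_notMem_image_or_snd_notMem_image_of_isChain {s : Set (α × β)} {m : α × β}
    (hs : IsChain (· ≤ ·) s) (hub : m ∈ upperBounds s) (hm : m ∉ s) :
    m.1 ∉ Prod.fst '' s ∨ m.2 ∉ Prod.snd '' s := by
  by_contra! ⟨⟨p, hp, hpm⟩, q, hq, hqm⟩
  rcases hs.total hp hq with hpq | hqp
  · have hq_eq : q = m := Prod.ext ((hub hq).1.antisymm (hpm ▸ hpq.1)) hqm
    exact hm (hq_eq ▸ hq)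
  · have hp_eq : p = m := Prod.ext hpm ((hub hp).2.antisymm (hqm ▸ hqp.2))
    exact hm (hp_eq ▸ hp)

variable [DecidableEq α] [DecidableEq β]

theorem card_image_fst_add_card_image_snd_lt_insert {s : Finset (α × β)} {m : α × β}
    (hs : IsChain (· ≤ ·) (s : Set (α × β))) (hub : m ∈ upperBounds (s : Set (α × β)))
    (hm : m ∉ s) :
    (s.image Prod.fst).card + (s.image Prod.snd).card <
      ((insert m s).image Prod.fst).card + ((insert m s).image Prod.snd).card := by
  have hnew := fst_notMem_image_or_snd_notMem_image_of_isChain hs hub (by simpa using hm)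
  simp only [← Finset.coe_image, Finset.mem_coe] at hnew
  simp only [Finset.image_insert]
  rcases hnew with hfst | hsnd
  · exact add_lt_add_of_lt_of_le (Finset.card_lt_card (Finset.ssubset_insert hfst))
      (Finset.card_le_card (Finset.subset_insert _ _))
  · exact add_lt_add_of_le_of_lt (Finset.card_le_card (Finset.subset_insert _ _))
      (Finset.card_lt_card (Finset.ssubset_insert hsnd))

theorem card_lt_card_image_fst_add_card_image_snd {s : Finset (α × β)}
    (hs : IsChain (· ≤ ·) (s : Set (α × β))) (hne : s.Nonempty) :
    s.card < (s.image Prod.fst).card + (s.image Prod.snd).card := by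
  induction s using Finset.eraseInduction with
  | H s ih =>
    obtain ⟨m, hm⟩ := s.exists_maximal hne
    have hchain : IsChain (· ≤ ·) (s.erase m : Set (α × β)) :=
      hs.mono (Finset.coe_subset.2 (s.erase_subset m))
    have hub : m ∈ upperBounds (s.erase m : Set (α × β)) := fun p hp =>
      have hps : p ∈ s := Finset.mem_of_mem_erase hp
      (hs.total hps hm.prop).elim id (hm.le_of_ge hps)
    rcases (s.erase m).eq_empty_or_nonempty with hempty | hnonempty
    · rw [← Finset.insert_erase hm.prop, hempty]
      simp
    · have hlt := card_image_fst_add_card_image_snd_lt_insert hchain hub (s.notMem_erase m)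
      rw [Finset.insert_erase hm.prop] at hlt
      have hih := ih m hm.prop hchain hnonempty
      have hcard := Finset.card_erase_add_one hm.prop
      lia

end ChainsInProducts

theorem maximal_chain_fst_surjective_general {ι α β : Type*} [LinearOrder ι] [PartialOrder α]
    [PartialOrder β] [Fintype ι] [Nonempty ι] [Fintype α] [Fintype β] (Γ : ι → α × β)
    (hmono : Monotone Γ) (hinj : Function.Injective Γ)
    (hcard : Fintype.card α + Fintype.card β ≤ Fintype.card ι + 1) :
    Function.Surjective (fun j => (Γ j).1) := by
  classical
  let s : Finset (α × β) := Finset.univ.image Γ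
  have hchain : IsChain (· ≤ ·) (s : Set (α × β)) := by
    simpa [s] using hmono.isChain_range
  have hlt := card_lt_card_image_fst_add_card_image_snd hchain (Finset.univ_nonempty.image Γ)
  have hs : s.card = Fintype.card ι := Finset.card_image_of_injective _ hinj
  have hsnd : (s.image Prod.snd).card ≤ Fintype.card β := Finset.card_le_univ _
  have hfst : s.image Prod.fst = Finset.univ :=
    Finset.eq_univ_of_card _ (le_antisymm (Finset.card_le_univ _) (by lia))
  intro a
  have ha : a ∈ s.image Prod.fst := hfst ▸ Finset.mem_univ a
  simpa [s, Finset.image_image] using ha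

/-- Let `n, r ≥ 0` and let `Γ : [n+r] → [n] × [r]` be a monotone map
(where `[k] = Fin (k+1)` and `[n] × [r]` carries the componentwise order).
If `Γ` is injective, then `fst ∘ Γ : [n+r] → [n]` is surjective. -/
theorem maximal_chain_fst_surjective (n r : ℕ)
    (Γ : Fin (n + r + 1) → Fin (n + 1) × Fin (r + 1))
    (hmono : Monotone Γ) (hinj : Function.Injective Γ) :
    Function.Surjective (fun j => (Γ j).1) :=
  maximal_chain_fst_surjective_general Γ hmono hinj (by simp only [Fintype.card_fin]; lia)
end

section
/- Let Γ : [n+r] → [n] × [r] be a maximal chain. Then for every i ∈ [n+r] one has ((Γ i).fst : ℕ) + ((Γ i).snd : ℕ) = (i : ℕ). -/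
/-!
The coordinate sum is strictly monotone from `[n] × [r]` to `[n + r]`, so composing it with a
maximal chain gives a strictly monotone self-map of the finite linear order `[n + r]`. The identity
is the only such map.
-/

theorem strictMono_fst_add_snd {α β M : Type*} [PartialOrder α] [PartialOrder β] [Add M]
    [PartialOrder M] [AddLeftStrictMono M] [AddRightStrictMono M] {f : α → M} {g : β → M}
    (hf : StrictMono f) (hg : StrictMono g) : StrictMono fun p : α × β ↦ f p.1 + g p.2 := by
  have := addLeftMono_of_addLeftStrictMono M
  have := addRightMono_of_addRightStrictMono M
  intro p q hpq
  rcases Prod.lt_iff.mp hpq with ⟨hfst, hsnd⟩ | ⟨hfst, hsnd⟩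
  · exact add_lt_add_of_lt_of_le (hf hfst) (hg.monotone hsnd)
  · exact add_lt_add_of_le_of_lt (hf.monotone hfst) (hg hsnd)

/-- The rank function of the graded poset `[n] × [r]`, the sum of the coordinates. It takes values
in `[n + r]` rather than `ℕ`, so that following a maximal chain by it gives a self-map. -/
def gridRank {n r : ℕ} (p : Fin (n + 1) × Fin (r + 1)) : Fin (n + r + 1) :=
  ⟨p.1 + p.2, by omega⟩

theorem strictMono_gridRank {n r : ℕ} : StrictMono (gridRank (n := n) (r := r)) :=
  strictMono_fst_add_snd Fin.val_strictMono Fin.val_strictMono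

/-- Let `Γ : [n+r] → [n] × [r]` be a maximal chain (monotone and
injective, with the componentwise order on the codomain). Then for every
`i ∈ [n+r]` one has `(Γ i).fst + (Γ i).snd = i` in `ℕ`. -/
theorem maximal_chain_coord_sum (n r : ℕ)
    (Γ : Fin (n + r + 1) → Fin (n + 1) × Fin (r + 1))
    (hmono : Monotone Γ) (hinj : Function.Injective Γ) :
    ∀ i : Fin (n + r + 1), ((Γ i).1 : ℕ) + ((Γ i).2 : ℕ) = (i : ℕ) := by
  intro i
  have hΓ : StrictMono Γ := hmono.strictMono_of_injective hinj
  have hrank : gridRank (Γ i) = i := (strictMono_gridRank.comp hΓ).apply_eq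
  exact congrArg Fin.val hrank
end

section
/- Let Γ : [n+r] → [n] × [r] be a maximal chain and let v ∈ [n+r] with 0 < v < n+r satisfy Γ(v+1) = ((Γ(v−1)).fst + 1, (Γ(v−1)).snd + 1). Say v ∈ Inn_fs(Γ) if moreover Γ(v+1) = ((Γ v).fst + 1, (Γ v).snd), and v ∈ Inn_bs(Γ) if moreover Γ(v+1) = ((Γ v).fst, (Γ v).snd + 1) (exactly one of the two holds). Then Γ ∘ δ_v : [n+r−1] → [n] × [r] is a global chain, and: (1) for every natural number i ≤ v, { j ∈ [n] | bs_Γ(j) ≥ i } = { j ∈ [n] | bs_{Γ∘δ_v}(j) ≥ i }; (2) if v ∈ Inn_fs(Γ), then for every i > v, { j ∈ [n] | bs_Γ(j) ≥ i } = { j ∈ [n] | bs_{Γ∘δ_v}(j) ≥ i−1 }; (3) if v ∈ Inn_bs(Γ), then for every i > v+1, { j ∈ [n] | bs_Γ(j) ≥ i } = { j ∈ [n] | bs_{Γ∘δ_v}(j) ≥ i−1 }. -/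
/-- `bs_Γ(i) = min { j | (Γ j).fst = i }`, as a natural number
(`sInf` of the empty set is `0`; for global chains the set is nonempty). -/
noncomputable def bsN {q n r : ℕ} (Γ : Fin q → Fin (n + 1) × Fin (r + 1))
    (i : Fin (n + 1)) : ℕ :=
  sInf { j : ℕ | ∃ h : j < q, (Γ ⟨j, h⟩).1 = i }

/-!
Deleting the vertex `v` turns first occurrences into first occurrences: `bs_{Γ ∘ δ_v} = σ_v ∘ bs_Γ`,
where `σ_v = Fin.predAbove v` is the degeneracy with `σ_v ∘ δ_v = id`. Indeed `σ_v` is monotone, and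
`δ_v (σ_v b) = b` unless `b = v`; if `v` is itself a first occurrence, then `v + 1` lies in the same
column and takes its place. The threshold sets of `bs_{Γ ∘ δ_v}` are read off this formula, using for
`v ∈ Inn_fs(Γ)` that `v` is not a first occurrence. A maximal chain is global because
`[n] × [r]` with a column removed has too few ranks for a chain of `n + r + 1` elements.
-/

theorem val_predAbove {m : ℕ} (v : Fin m) (b : Fin (m + 1)) :
    (v.predAbove b : ℕ) = if (b : ℕ) ≤ v then (b : ℕ) else b - 1 := by
  rcases le_or_gt b v.castSucc with hbv | hvb
  · rw [Fin.predAbove_of_le_castSucc v b hbv]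
    exact (if_pos hbv).symm
  · rw [Fin.predAbove_of_castSucc_lt v b hvb]
    exact (if_neg hvb.not_ge).symm

section FiberMinimum

variable {α : Type*} {m : ℕ} {f : Fin (m + 1) → α} {v : Fin m}

theorem isLeast_fiber_comp_succAbove
    (hv : (∃ w < v.castSucc, f w = f v.castSucc) ∨ f v.castSucc = f v.succ)
    {a : α} {b : Fin (m + 1)} (hb : IsLeast {k | f k = a} b) :
    IsLeast {k | f (v.castSucc.succAbove k) = a} (v.predAbove b) := by
  refine ⟨?_, fun k hk => ?_⟩
  · rcases eq_or_ne b v.castSucc with rfl | hbv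
    · have hnext : f v.castSucc = f v.succ :=
        hv.resolve_left fun ⟨w, hw, hfw⟩ => hw.not_ge (hb.2 (hfw.trans hb.1))
      simpa [← hnext] using hb.1
    · simpa [Fin.succAbove_predAbove hbv] using hb.1
  · simpa using Fin.predAbove_right_monotone v (hb.2 hk)

theorem surjective_comp_succAbove
    (hv : (∃ w < v.castSucc, f w = f v.castSucc) ∨ f v.castSucc = f v.succ)
    (hf : Function.Surjective f) : Function.Surjective (f ∘ v.castSucc.succAbove) := fun a =>
  ⟨_, (isLeast_fiber_comp_succAbove hv (isLeast_csInf (hf a))).1⟩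

end FiberMinimum

section FirstOccurrence

variable {n r : ℕ}

theorem bsN_eq_of_isLeast {q : ℕ} {Γ : Fin q → Fin (n + 1) × Fin (r + 1)} {j : Fin (n + 1)}
    {b : Fin q} (hb : IsLeast {k | (Γ k).1 = j} b) : bsN Γ j = b :=
  IsLeast.csInf_eq ⟨⟨b.2, hb.1⟩, fun _ ⟨_, hk⟩ => hb.2 hk⟩

variable {m : ℕ} {Γ : Fin (m + 1) → Fin (n + 1) × Fin (r + 1)} {v : Fin m}

theorem exists_isLeast_bsN_eq (hΓ : Function.Surjective fun k => (Γ k).1) (j : Fin (n + 1)) :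
    ∃ b : Fin (m + 1), IsLeast {k | (Γ k).1 = j} b ∧ bsN Γ j = b :=
  have hb := isLeast_csInf (hΓ j)
  ⟨_, hb, bsN_eq_of_isLeast hb⟩

theorem bsN_comp_succAbove (hΓ : Function.Surjective fun k => (Γ k).1)
    (hv : (∃ w < v.castSucc, (Γ w).1 = (Γ v.castSucc).1) ∨ (Γ v.castSucc).1 = (Γ v.succ).1)
    (j : Fin (n + 1)) :
    bsN (Γ ∘ v.castSucc.succAbove) j =
      if bsN Γ j ≤ v then bsN Γ j else bsN Γ j - 1 := by
  obtain ⟨b, hb, hbj⟩ := exists_isLeast_bsN_eq hΓ j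
  have hface : bsN (Γ ∘ v.castSucc.succAbove) j = v.predAbove b :=
    bsN_eq_of_isLeast (isLeast_fiber_comp_succAbove (f := fun k => (Γ k).1) hv hb)
  rw [hface, hbj, val_predAbove]

theorem bsN_ne_of_lt_of_fst_eq (hΓ : Function.Surjective fun k => (Γ k).1)
    {w u : Fin (m + 1)} (hwu : w < u) (h : (Γ w).1 = (Γ u).1) (j : Fin (n + 1)) :
    bsN Γ j ≠ u := by
  obtain ⟨b, hb, hbj⟩ := exists_isLeast_bsN_eq hΓ j
  rw [hbj, Fin.val_ne_iff]
  rintro rfl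
  exact hwu.not_ge (hb.2 (h.trans hb.1))

end FirstOccurrence

/-- A global chain of `[n] × [r]`: an injective monotone map from `[p] = Fin q`, `q = p + 1`, whose
first coordinate takes every value. -/
structure IsGlobalChain {q n r : ℕ} (Γ : Fin q → Fin (n + 1) × Fin (r + 1)) : Prop where
  monotone : Monotone Γ
  injective : Function.Injective Γ
  fst_surjective : Function.Surjective fun k => (Γ k).1

theorem IsGlobalChain.of_maximal {n r : ℕ} {Γ : Fin (n + r + 1) → Fin (n + 1) × Fin (r + 1)}
    (hmono : Monotone Γ) (hinj : Function.Injective Γ) : IsGlobalChain Γ := by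
  refine ⟨hmono, hinj, fun j => ?_⟩
  by_contra! hj
  have hne (k) : ((Γ k).1 : ℕ) ≠ j := Fin.val_ne_of_ne (hj k)
  -- The rank function of the product with column `j` deleted takes only `n + r` values.
  let rank (k : Fin (n + r + 1)) : ℕ :=
    (if (Γ k).1 < (j : ℕ) then ((Γ k).1 : ℕ) else (Γ k).1 - 1) + (Γ k).2
  have rank_lt (k) : rank k < n + r := by
    have := hne k
    dsimp only [rank]
    split_ifs <;> omega
  have rank_strictMono : StrictMono rank := by
    intro k l hkl
    have hlt := Prod.lt_iff.mp (hmono.strictMono_of_injective hinj hkl)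
    simp only [Fin.lt_def, Fin.le_def] at hlt
    have := hne k
    have := hne l
    dsimp only [rank]
    split_ifs <;> omega
  have hcard := Fintype.card_le_of_injective (fun k => (⟨rank k, rank_lt k⟩ : Fin (n + r)))
    fun _ _ h => rank_strictMono.injective (congrArg Fin.val h)
  simp at hcard

theorem IsGlobalChain.comp_succAbove {m n r : ℕ} {Γ : Fin (m + 1) → Fin (n + 1) × Fin (r + 1)}
    {v : Fin m} (hΓ : IsGlobalChain Γ)
    (hv : (∃ w < v.castSucc, (Γ w).1 = (Γ v.castSucc).1) ∨ (Γ v.castSucc).1 = (Γ v.succ).1) :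
    IsGlobalChain (Γ ∘ v.castSucc.succAbove) where
  monotone := hΓ.monotone.comp (Fin.strictMono_succAbove _).monotone
  injective := hΓ.injective.comp Fin.succAbove_right_injective
  fst_surjective := surjective_comp_succAbove hv hΓ.fst_surjective

theorem bs_of_face_general {m n r : ℕ} {Γ : Fin (m + 1) → Fin (n + 1) × Fin (r + 1)}
    (hΓ : IsGlobalChain Γ) {v : ℕ} (hv0 : 0 < v) (hv1 : v < m)
    (hstep : ((Γ ⟨v + 1, by omega⟩).1 : ℕ) ≤ (Γ ⟨v - 1, by omega⟩).1 + 1) :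
    IsGlobalChain (Γ ∘ (⟨v, by omega⟩ : Fin (m + 1)).succAbove) ∧
    (∀ i ≤ v, {j | i ≤ bsN Γ j} =
      {j | i ≤ bsN (Γ ∘ (⟨v, by omega⟩ : Fin (m + 1)).succAbove) j}) ∧
    ((Γ ⟨v, by omega⟩).1 < (Γ ⟨v + 1, by omega⟩).1 → ∀ i > v, {j | i ≤ bsN Γ j} =
      {j | i - 1 ≤ bsN (Γ ∘ (⟨v, by omega⟩ : Fin (m + 1)).succAbove) j}) ∧
    ((Γ ⟨v, by omega⟩).1 = (Γ ⟨v + 1, by omega⟩).1 → ∀ i > v + 1, {j | i ≤ bsN Γ j} =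
      {j | i - 1 ≤ bsN (Γ ∘ (⟨v, by omega⟩ : Fin (m + 1)).succAbove) j}) := by
  have hprev_lt : (⟨v - 1, by omega⟩ : Fin (m + 1)) < ⟨v, by omega⟩ :=
    Fin.mk_lt_mk.mpr (by omega)
  have hprev_le : (Γ ⟨v - 1, by omega⟩).1 ≤ (Γ ⟨v, by omega⟩).1 := (hΓ.monotone hprev_lt.le).1
  have hle_next : (Γ ⟨v, by omega⟩).1 ≤ (Γ ⟨v + 1, by omega⟩).1 :=
    (hΓ.monotone (Fin.mk_le_mk.mpr v.le_succ)).1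
  have hprev (h : (Γ ⟨v, by omega⟩).1 < (Γ ⟨v + 1, by omega⟩).1) :
      (Γ ⟨v - 1, by omega⟩).1 = (Γ ⟨v, by omega⟩).1 := by
    omega
  have hface : (∃ w < ⟨v, by omega⟩, (Γ w).1 = (Γ ⟨v, by omega⟩).1) ∨
      (Γ ⟨v, by omega⟩).1 = (Γ ⟨v + 1, by omega⟩).1 :=
    hle_next.lt_or_eq.imp_left fun h => ⟨_, hprev_lt, hprev h⟩
  have hbs := bsN_comp_succAbove (v := ⟨v, hv1⟩) hΓ.fst_surjective hface
  simp only [Fin.castSucc_mk] at hbs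
  refine ⟨hΓ.comp_succAbove (v := ⟨v, hv1⟩) hface, fun i hi => ?_, fun h i hi => ?_,
    fun _ i hi => ?_⟩ <;> ext j <;> simp only [Set.mem_ofPred_eq, hbs]
  · split_ifs <;> omega
  · have : bsN Γ j ≠ v := bsN_ne_of_lt_of_fst_eq hΓ.fst_surjective hprev_lt (hprev h) j
    split_ifs <;> omega
  · split_ifs <;> omega

/-- Let `Γ : [n+r] → [n] × [r]` be a maximal chain and let
`v ∈ [n+r]` with `0 < v < n+r` satisfy
`Γ(v+1) = ((Γ(v−1)).fst + 1, (Γ(v−1)).snd + 1)`.  Then `Γ ∘ δ_v` is a global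
chain, and:
(1) for every `i ≤ v`, `{ j | bs_Γ(j) ≥ i } = { j | bs_{Γ∘δ_v}(j) ≥ i }`;
(2) if `v ∈ Inn_fs(Γ)` (i.e. `Γ(v+1) = ((Γ v).fst + 1, (Γ v).snd)`), then for
    every `i > v`, `{ j | bs_Γ(j) ≥ i } = { j | bs_{Γ∘δ_v}(j) ≥ i−1 }`;
(3) if `v ∈ Inn_bs(Γ)` (i.e. `Γ(v+1) = ((Γ v).fst, (Γ v).snd + 1)`), then for
    every `i > v+1`, `{ j | bs_Γ(j) ≥ i } = { j | bs_{Γ∘δ_v}(j) ≥ i−1 }`. -/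
theorem bs_of_face (n r : ℕ)
    (Γ : Fin (n + r + 1) → Fin (n + 1) × Fin (r + 1))
    (hmono : Monotone Γ) (hinj : Function.Injective Γ)
    (v : ℕ) (hv0 : 0 < v) (hv1 : v < n + r)
    (hstep1 : ((Γ ⟨v + 1, by omega⟩).1 : ℕ) = ((Γ ⟨v - 1, by omega⟩).1 : ℕ) + 1)
    (hstep2 : ((Γ ⟨v + 1, by omega⟩).2 : ℕ) = ((Γ ⟨v - 1, by omega⟩).2 : ℕ) + 1) :
    (Monotone (Γ ∘ (⟨v, by omega⟩ : Fin (n + r + 1)).succAbove) ∧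
     Function.Injective (Γ ∘ (⟨v, by omega⟩ : Fin (n + r + 1)).succAbove) ∧
     Function.Surjective
       (fun k => ((Γ ∘ (⟨v, by omega⟩ : Fin (n + r + 1)).succAbove) k).1)) ∧
    (∀ i : ℕ, i ≤ v →
      { j : Fin (n + 1) | i ≤ bsN Γ j } =
      { j : Fin (n + 1) |
          i ≤ bsN (Γ ∘ (⟨v, by omega⟩ : Fin (n + r + 1)).succAbove) j }) ∧
    ((((Γ ⟨v + 1, by omega⟩).1 : ℕ) = ((Γ ⟨v, by omega⟩).1 : ℕ) + 1 ∧
      ((Γ ⟨v + 1, by omega⟩).2 : ℕ) = ((Γ ⟨v, by omega⟩).2 : ℕ)) →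
      ∀ i : ℕ, v < i →
        { j : Fin (n + 1) | i ≤ bsN Γ j } =
        { j : Fin (n + 1) |
            i - 1 ≤ bsN (Γ ∘ (⟨v, by omega⟩ : Fin (n + r + 1)).succAbove) j }) ∧
    ((((Γ ⟨v + 1, by omega⟩).1 : ℕ) = ((Γ ⟨v, by omega⟩).1 : ℕ) ∧
      ((Γ ⟨v + 1, by omega⟩).2 : ℕ) = ((Γ ⟨v, by omega⟩).2 : ℕ) + 1) →
      ∀ i : ℕ, v + 1 < i →
        { j : Fin (n + 1) | i ≤ bsN Γ j } =
        { j : Fin (n + 1) |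
            i - 1 ≤ bsN (Γ ∘ (⟨v, by omega⟩ : Fin (n + r + 1)).succAbove) j }) := by
  obtain ⟨hface, hlow, hfs, hbs⟩ :=
    bs_of_face_general (IsGlobalChain.of_maximal hmono hinj) hv0 hv1 hstep1.le
  exact ⟨⟨hface.1, hface.2, hface.3⟩, hlow, fun h => hfs h.1.ge, fun h => hbs (Fin.ext h.1.symm)⟩
end

section
/- Let Γ₁ : [n+r] → [n] × [r] be a maximal chain and α : [m] → [n] an injective monotone map. Suppose Γ₂ : [p] → [m] × [r] and β : [p] → [n+r] are monotone maps forming a pullback square over α × id and Γ₁; that is, (α((Γ₂ k).fst), (Γ₂ k).snd) = Γ₁(β k) for all k ∈ [p], and for every x ∈ [m] × [r] and y ∈ [n+r] with (α(x.fst), x.snd) = Γ₁(y) there is a unique k ∈ [p] with Γ₂(k) = x and β(k) = y. Then fst ∘ Γ₂ is surjective (so Γ₂ is a global chain), and β(bs_{Γ₂}(i)) = bs_{Γ₁}(α(i)) for every i ∈ [m]. -/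
open Finset

/-- `bs_Γ(i) = min { j | (Γ j).fst = i }` (defined to be `0` if the set is
empty; for global chains the set is always nonempty). -/
def bs {p n r : ℕ} (Γ : Fin (p + 1) → Fin (n + 1) × Fin (r + 1))
    (i : Fin (n + 1)) : Fin (p + 1) :=
  if h : (univ.filter fun j => (Γ j).1 = i).Nonempty
  then (univ.filter fun j => (Γ j).1 = i).min' h else 0

/-!
A chain in `[n] × [r]` has at most `n + r + 1` elements, because the coordinate sum increases
strictly along it. A chain of length `n + r` whose first coordinate omitted a value would live in
`[n - 1] × [r]`, which is too small; so maximal chains have surjective first coordinate.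

Pasting the given square with the pullback of `fst` along `α` shows that `β` maps the fibre of
`fst ∘ Γ₂` over `i` onto the fibre of `fst ∘ Γ₁` over `α i`. A monotone map sends the least element
of a set to the least element of its image, and `bs` picks out least elements of fibres.
-/

theorem card_le_of_strictMono_prod {q n r : ℕ} {Γ : Fin q → Fin n × Fin (r + 1)}
    (hΓ : StrictMono Γ) : q ≤ n + r := by
  have rank_strictMono : StrictMono fun k => ((Γ k).1 + (Γ k).2 : ℕ) := fun k l hkl => by
    have hlt := Prod.lt_iff.mp (hΓ hkl)
    lia
  have rank_lt (k : Fin q) : ((Γ k).1 + (Γ k).2 : ℕ) < n + r := by lia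
  simpa using Fintype.card_le_of_injective (fun k => (⟨_, rank_lt k⟩ : Fin (n + r)))
    fun k l hkl => rank_strictMono.injective (Fin.val_eq_of_eq hkl)

theorem surjective_fst_of_strictMono {n r : ℕ}
    {Γ : Fin (n + r + 1) → Fin (n + 1) × Fin (r + 1)} (hΓ : StrictMono Γ) :
    Function.Surjective fun k => (Γ k).1 := by
  intro i
  by_contra! hi
  choose x hx using fun k => Fin.exists_succAbove_eq (hi k)
  have collapse_strictMono : StrictMono fun k => (x k, (Γ k).2) := fun k l hkl => by
    simpa only [Prod.lt_iff, ← hx, Fin.succAbove_lt_succAbove_iff,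
      Fin.succAbove_le_succAbove_iff] using hΓ hkl
  exact (card_le_of_strictMono_prod collapse_strictMono).not_gt (by lia)

theorem isLeast_bs {p n r : ℕ} {Γ : Fin (p + 1) → Fin (n + 1) × Fin (r + 1)} {i : Fin (n + 1)}
    (hi : ∃ j, (Γ j).1 = i) : IsLeast {j | (Γ j).1 = i} (bs Γ i) := by
  have hi' : (univ.filter fun j => (Γ j).1 = i).Nonempty := by
    simpa only [filter_nonempty_iff, mem_univ, true_and] using hi
  simpa [bs, hi'] using isLeast_min' _ hi'

theorem image_fiber_of_weakPullback {ι κ A B : Type*} {f : ι → B} {g : κ → A} {α : A → B}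
    {β : κ → ι} (hcomm : ∀ k, α (g k) = f (β k))
    (hlift : ∀ a y, α a = f y → ∃ k, g k = a ∧ β k = y) (a : A) :
    β '' {k | g k = a} = {y | f y = α a} := by
  ext y
  constructor
  · rintro ⟨k, rfl, rfl⟩
    exact (hcomm k).symm
  · intro hy
    exact hlift a y hy.symm

theorem pullback_bs_general {n r m p q : ℕ} {Γ₁ : Fin (q + 1) → Fin (n + 1) × Fin (r + 1)}
    (hΓ₁ : Function.Surjective fun k => (Γ₁ k).1) {α : Fin (m + 1) → Fin (n + 1)}
    {Γ₂ : Fin (p + 1) → Fin (m + 1) × Fin (r + 1)} {β : Fin (p + 1) → Fin (q + 1)} (hβ : Monotone β)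
    (hcomm : ∀ k, (α (Γ₂ k).1, (Γ₂ k).2) = Γ₁ (β k))
    (hlift : ∀ x y, (α x.1, x.2) = Γ₁ y → ∃ k, Γ₂ k = x ∧ β k = y) :
    Function.Surjective (fun k => (Γ₂ k).1) ∧
    ∀ i : Fin (m + 1), β (bs Γ₂ i) = bs Γ₁ (α i) := by
  have hcomm_fst (k : Fin (p + 1)) : α (Γ₂ k).1 = (Γ₁ (β k)).1 := congrArg Prod.fst (hcomm k)
  have hlift_fst : ∀ i y, α i = (Γ₁ y).1 → ∃ k, (Γ₂ k).1 = i ∧ β k = y := fun i y hy => by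
    obtain ⟨k, hk, hβk⟩ := hlift (i, (Γ₁ y).2) y (Prod.ext hy rfl)
    exact ⟨k, congrArg Prod.fst hk, hβk⟩
  have image_fiber (i : Fin (m + 1)) : β '' {k | (Γ₂ k).1 = i} = {y | (Γ₁ y).1 = α i} :=
    image_fiber_of_weakPullback (f := fun y => (Γ₁ y).1) hcomm_fst hlift_fst i
  have hΓ₂ : Function.Surjective fun k => (Γ₂ k).1 := fun i => by
    obtain ⟨y, hy⟩ := hΓ₁ (α i)
    exact (hlift_fst i y hy.symm).imp fun _ => And.left
  refine ⟨hΓ₂, fun i => ?_⟩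
  have least_image : IsLeast {y | (Γ₁ y).1 = α i} (β (bs Γ₂ i)) :=
    image_fiber i ▸ hβ.map_isLeast (isLeast_bs (hΓ₂ i))
  exact least_image.unique (isLeast_bs (hΓ₁ (α i)))

/-- Let `Γ₁ : [n+r] → [n] × [r]` be a maximal chain and
`α : [m] → [n]` an injective monotone map.  Suppose `Γ₂ : [p] → [m] × [r]` and
`β : [p] → [n+r]` are monotone maps forming a pullback square over `α × id`
and `Γ₁`.  Then `fst ∘ Γ₂` is surjective (so `Γ₂` is a global chain), and
`β(bs_{Γ₂}(i)) = bs_{Γ₁}(α(i))` for every `i ∈ [m]`. -/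
theorem pullback_bs (n r m p : ℕ)
    (Γ₁ : Fin (n + r + 1) → Fin (n + 1) × Fin (r + 1))
    (hΓ₁mono : Monotone Γ₁) (hΓ₁inj : Function.Injective Γ₁)
    (α : Fin (m + 1) → Fin (n + 1)) (hαmono : Monotone α)
    (hαinj : Function.Injective α)
    (Γ₂ : Fin (p + 1) → Fin (m + 1) × Fin (r + 1)) (hΓ₂mono : Monotone Γ₂)
    (β : Fin (p + 1) → Fin (n + r + 1)) (hβmono : Monotone β)
    (hcomm : ∀ k, (α (Γ₂ k).1, (Γ₂ k).2) = Γ₁ (β k))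
    (hpull : ∀ (x : Fin (m + 1) × Fin (r + 1)) (y : Fin (n + r + 1)),
      (α x.1, x.2) = Γ₁ y → ∃! k : Fin (p + 1), Γ₂ k = x ∧ β k = y) :
    Function.Surjective (fun k => (Γ₂ k).1) ∧
    ∀ i : Fin (m + 1), β (bs Γ₂ i) = bs Γ₁ (α i) :=
  pullback_bs_general (surjective_fst_of_strictMono (hΓ₁mono.strictMono_of_injective hΓ₁inj))
    hβmono hcomm fun x y hxy => (hpull x y hxy).exists
end

section
/- Let Γ₁ : [n+r] → [n] × [r] and Γ₂ : [m+r] → [m] × [r] be maximal chains, and let α : [m] → [n] and β : [m+r] → [n+r] be injective monotone maps such that (α((Γ₂ k).fst), (Γ₂ k).snd) = Γ₁(β k) for all k ∈ [m+r]. Then for every i with 1 ≤ i ≤ r and every j ∈ [m+r]: (β(j) : ℕ) ≥ fs_{Γ₁}(i) + 1 if and only if (j : ℕ) ≥ fs_{Γ₂}(i) + 1. Equivalently, whenever the set { j ∈ [m+r] | (β(j) : ℕ) ≥ fs_{Γ₁}(i) + 1 } is nonempty, its least element is fs_{Γ₂}(i) + 1. -/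
/-- `fs_Γ(i) = min { j | (Γ j).snd ≥ i }`, as a natural number, with the
index `i` taken in `ℕ` (`sInf` of the empty set is `0`; for maximal chains
and `i ≤ r` the set is nonempty). -/
noncomputable def fsN {q n r : ℕ} (Γ : Fin q → Fin (n + 1) × Fin (r + 1))
    (i : ℕ) : ℕ :=
  sInf { j : ℕ | ∃ h : j < q, i ≤ ((Γ ⟨j, h⟩).2 : ℕ) }

/-!
A maximal chain is saturated: `(Γ k).1 + (Γ k).2 = k`, so consecutive indices go to a covering pair.
The step by which `Γ₂` first reaches height `i` is therefore a vertical covering step. Since `α`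
acts only on the first coordinate, `Γ₁ ∘ β` turns it into a vertical covering step across the same
height, so its endpoints are consecutive in `Γ₁`. Hence `β` carries `fs_{Γ₂}(i)` to `fs_{Γ₁}(i)`,
and strict monotonicity of `β` does the rest.
-/

theorem exists_covBy_lt_le {ι κ : Type*} [Preorder ι] [LocallyFiniteOrder ι] [LinearOrder κ]
    {f : ι → κ} {i : κ} {k l : ι} (hkl : k < l) (hk : f k < i) (hl : i ≤ f l) :
    ∃ a b, a ⋖ b ∧ f a < i ∧ i ≤ f b := by
  replace hkl := transGen_covBy_of_lt hkl
  induction hkl with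
  | single hkb => exact ⟨k, _, hkb, hk, hl⟩
  | @tail b c _ hbc ih =>
    rcases lt_or_ge (f b) i with hb | hb
    · exact ⟨b, c, hbc, hb, hl⟩
    · exact ih hb

theorem covBy_of_prod_covBy_of_snd_ne {ι κ X X' Y : Type*} [LinearOrder ι] [PartialOrder X]
    [PartialOrder X'] [PartialOrder Y] {Γ₁ : ι → X' × Y} (hΓ₁ : StrictMono Γ₁) {Γ₂ : κ → X × Y}
    {α : X → X'} {β : κ → ι} (hcomm : ∀ k, (α (Γ₂ k).1, (Γ₂ k).2) = Γ₁ (β k)) {a b : κ}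
    (hab : Γ₂ a ⋖ Γ₂ b) (hne : (Γ₂ a).2 ≠ (Γ₂ b).2) : β a ⋖ β b := by
  obtain ⟨hsnd, hfst⟩ := (Prod.covBy_iff.mp hab).resolve_left fun h ↦ hne h.2
  refine CovBy.of_image (OrderEmbedding.ofStrictMono Γ₁ hΓ₁) ?_
  change Γ₁ (β a) ⋖ Γ₁ (β b)
  rw [← hcomm, ← hcomm, hfst]
  exact Prod.mk_covBy_mk_iff_right.mpr hsnd

theorem fsN_eq_of_covBy {q n r : ℕ} {Γ : Fin q → Fin (n + 1) × Fin (r + 1)} (hΓ : Monotone Γ)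
    {i : ℕ} {a b : Fin q} (hab : a ⋖ b) (ha : ((Γ a).2 : ℕ) < i) (hb : i ≤ ((Γ b).2 : ℕ)) :
    fsN Γ i = b := by
  refine IsLeast.csInf_eq ⟨⟨b.isLt, hb⟩, ?_⟩
  rintro j ⟨hj, hij⟩
  have haj : a < ⟨j, hj⟩ := (monotone_snd.comp hΓ).reflect_lt (ha.trans_le hij)
  exact hab.ge_of_gt haj

theorem strictMono_fst_add_snd_s7 (m n : ℕ) :
    StrictMono fun p : Fin m × Fin n ↦ (p.1 : ℕ) + (p.2 : ℕ) := by
  intro p q hpq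
  rcases Prod.lt_iff.mp hpq with ⟨h₁, h₂⟩ | ⟨h₁, h₂⟩
  · exact add_lt_add_of_lt_of_le h₁ h₂
  · exact add_lt_add_of_le_of_lt h₁ h₂

section MaximalChain

variable {n r : ℕ} {Γ : Fin (n + r + 1) → Fin (n + 1) × Fin (r + 1)}

theorem fst_add_snd_eq_of_strictMono (hΓ : StrictMono Γ) (k : Fin (n + r + 1)) :
    ((Γ k).1 : ℕ) + ((Γ k).2 : ℕ) = k := by
  let rank (k : Fin (n + r + 1)) : Fin (n + r + 1) := ⟨(Γ k).1 + (Γ k).2, by omega⟩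
  have hrank : StrictMono rank := (strictMono_fst_add_snd_s7 _ _).comp hΓ
  exact congrArg Fin.val (hrank.apply_eq (x := k))

theorem map_covBy_of_strictMono (hΓ : StrictMono Γ) {a b : Fin (n + r + 1)} (hab : a ⋖ b) :
    Γ a ⋖ Γ b := by
  refine ⟨hΓ hab.lt, fun p hap hpb ↦ ?_⟩
  have hap' := strictMono_fst_add_snd_s7 _ _ hap
  have hpb' := strictMono_fst_add_snd_s7 _ _ hpb
  simp only [fst_add_snd_eq_of_strictMono hΓ] at hap' hpb'
  exact hab.2 (c := ⟨p.1 + p.2, by omega⟩) hap' hpb'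

theorem snd_zero_eq_zero_of_strictMono (hΓ : StrictMono Γ) : (Γ 0).2 = 0 :=
  Fin.ext (Nat.add_eq_zero_iff.mp (fst_add_snd_eq_of_strictMono hΓ 0)).2

theorem snd_last_eq_last_of_strictMono (hΓ : StrictMono Γ) :
    (Γ (Fin.last (n + r))).2 = Fin.last r := by
  have hsum := fst_add_snd_eq_of_strictMono hΓ (Fin.last (n + r))
  apply Fin.ext
  simp only [Fin.val_last] at hsum ⊢
  omega

end MaximalChain

theorem beta_fs_range_general {p q n m r i : ℕ} {Γ₁ : Fin p → Fin (n + 1) × Fin (r + 1)}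
    (hΓ₁ : StrictMono Γ₁) {Γ₂ : Fin q → Fin (m + 1) × Fin (r + 1)}
    (hΓ₂ : ∀ ⦃a b⦄, a ⋖ b → Γ₂ a ⋖ Γ₂ b) {α : Fin (m + 1) → Fin (n + 1)} {β : Fin q → Fin p}
    (hβ : StrictMono β) (hcomm : ∀ k, (α (Γ₂ k).1, (Γ₂ k).2) = Γ₁ (β k))
    (hlt : ∃ k, ((Γ₂ k).2 : ℕ) < i) (hle : ∃ k, i ≤ ((Γ₂ k).2 : ℕ)) (j : Fin q) :
    fsN Γ₁ i + 1 ≤ (β j : ℕ) ↔ fsN Γ₂ i + 1 ≤ (j : ℕ) := by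
  obtain ⟨k, hk⟩ := hlt
  obtain ⟨l, hl⟩ := hle
  have hΓ₂mono : Monotone Γ₂ := (monotone_iff_forall_covBy Γ₂).mpr fun _ _ h ↦ (hΓ₂ h).le
  have hkl : k < l := (monotone_snd.comp hΓ₂mono).reflect_lt (hk.trans_le hl)
  obtain ⟨a, b, hab, ha, hb⟩ :=
    exists_covBy_lt_le (f := fun k ↦ ((Γ₂ k).2 : ℕ)) hkl hk hl
  have hβab : β a ⋖ β b :=
    covBy_of_prod_covBy_of_snd_ne hΓ₁ hcomm (hΓ₂ hab) (Fin.ne_of_lt (ha.trans_le hb))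
  have hsnd (k : Fin q) : (Γ₂ k).2 = (Γ₁ (β k)).2 := congrArg Prod.snd (hcomm k)
  have hfs₂ : fsN Γ₂ i = b := fsN_eq_of_covBy hΓ₂mono hab ha hb
  have hfs₁ : fsN Γ₁ i = β b :=
    fsN_eq_of_covBy hΓ₁.monotone hβab (hsnd a ▸ ha) (hsnd b ▸ hb)
  rw [hfs₁, hfs₂]
  exact hβ.lt_iff_lt (a := b) (b := j)

/-- Let `Γ₁ : [n+r] → [n] × [r]` and `Γ₂ : [m+r] → [m] × [r]` be
maximal chains, and let `α : [m] → [n]` and `β : [m+r] → [n+r]` be injective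
monotone maps such that `(α((Γ₂ k).fst), (Γ₂ k).snd) = Γ₁(β k)` for all `k`.
Then for every `1 ≤ i ≤ r` and every `j ∈ [m+r]`:
`β(j) ≥ fs_{Γ₁}(i) + 1` if and only if `j ≥ fs_{Γ₂}(i) + 1`. -/
theorem beta_fs_range (n r m : ℕ)
    (Γ₁ : Fin (n + r + 1) → Fin (n + 1) × Fin (r + 1))
    (hΓ₁mono : Monotone Γ₁) (hΓ₁inj : Function.Injective Γ₁)
    (Γ₂ : Fin (m + r + 1) → Fin (m + 1) × Fin (r + 1))
    (hΓ₂mono : Monotone Γ₂) (hΓ₂inj : Function.Injective Γ₂)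
    (α : Fin (m + 1) → Fin (n + 1)) (hαmono : Monotone α)
    (hαinj : Function.Injective α)
    (β : Fin (m + r + 1) → Fin (n + r + 1)) (hβmono : Monotone β)
    (hβinj : Function.Injective β)
    (hcomm : ∀ k, (α (Γ₂ k).1, (Γ₂ k).2) = Γ₁ (β k)) :
    ∀ i : ℕ, 1 ≤ i → i ≤ r → ∀ j : Fin (m + r + 1),
      (fsN Γ₁ i + 1 ≤ (β j : ℕ) ↔ fsN Γ₂ i + 1 ≤ (j : ℕ)) := by
  intro i hi hir j
  have hΓ₁ := hΓ₁mono.strictMono_of_injective hΓ₁inj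
  have hΓ₂ := hΓ₂mono.strictMono_of_injective hΓ₂inj
  have hβ := hβmono.strictMono_of_injective hβinj
  refine beta_fs_range_general hΓ₁ (fun _ _ ↦ map_covBy_of_strictMono hΓ₂) hβ hcomm ⟨0, ?_⟩
    ⟨Fin.last (m + r), ?_⟩ j
  · rwa [snd_zero_eq_zero_of_strictMono hΓ₂]
  · rwa [snd_last_eq_last_of_strictMono hΓ₂]
end

section
/- Let Γ₁ : [n+r] → [n] × [r] be a maximal chain, α : [m] → [n] an injective monotone map, and let Γ₂ : [p] → [m] × [r] and β : [p] → [n+r] be monotone maps forming a pullback square over α × id and Γ₁ (i.e., (α((Γ₂ k).fst), (Γ₂ k).snd) = Γ₁(β k) for all k, and for every x ∈ [m] × [r], y ∈ [n+r] with (α(x.fst), x.snd) = Γ₁(y) there is a unique k ∈ [p] with Γ₂(k) = x and β(k) = y). If p < m + r (i.e., Γ₂ is not maximal), then there exists l ∈ [n] with l ∉ Im(α) such that bs_{Γ₁}(l) + 1 ∉ Im(bs_{Γ₁}), i.e., there is no l' ∈ [n] with (bs_{Γ₁}(l') : ℕ) = (bs_{Γ₁}(l) : ℕ) + 1. -/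
open Set

section Pigeonhole

variable {ι κ J A : Type*} [Finite κ] [Finite J] [Finite A]

lemma ncard_compl_range_lt_ncard_preimage {f : J → A} {α : ι → A} {β : κ → J}
    (hα : Function.Injective α) (hβ : f ⁻¹' range α ⊆ range β)
    (hcard : Nat.card κ + Nat.card A < Nat.card ι + Nat.card J) :
    (range α)ᶜ.ncard < (f ⁻¹' (range α)ᶜ).ncard := by
  have hrange : (range α).ncard = Nat.card ι := ncard_range_of_injective hα
  have hcover : (f ⁻¹' range α).ncard ≤ Nat.card κ :=
    (ncard_le_ncard hβ).trans (Finite.card_range_le β)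
  have hA := ncard_add_ncard_compl (range α)
  have hJ := ncard_add_ncard_compl (f ⁻¹' range α)
  rw [preimage_compl]
  lia

lemma exists_lt_map_eq_notMem_range [LinearOrder J] {f : J → A} {α : ι → A} {β : κ → J}
    (hα : Function.Injective α) (hβ : f ⁻¹' range α ⊆ range β)
    (hcard : Nat.card κ + Nat.card A < Nat.card ι + Nat.card J) :
    ∃ j j', j < j' ∧ f j = f j' ∧ f j ∉ range α := by
  obtain ⟨j, hj, j', hj', hne, heq⟩ := exists_ne_map_eq_of_ncard_lt_of_maps_to
    (ncard_compl_range_lt_ncard_preimage hα hβ hcard) (mapsTo_preimage f _)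
  rcases hne.lt_or_gt with hlt | hlt
  · exact ⟨j, j', hlt, heq, hj⟩
  · exact ⟨j', j, hlt, heq.symm, hj'⟩

end Pigeonhole

section FirstVisit

variable {q n r : ℕ} {Γ : Fin q → Fin (n + 1) × Fin (r + 1)}

variable (Γ) in
lemma bsN_fst_le (j : Fin q) : bsN Γ (Γ j).1 ≤ j :=
  Nat.sInf_le ⟨j.2, rfl⟩

variable (Γ) in
lemma exists_eq_bsN_fst (j : Fin q) :
    ∃ k : Fin q, (k : ℕ) = bsN Γ (Γ j).1 ∧ (Γ k).1 = (Γ j).1 := by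
  obtain ⟨hlt, hfst⟩ :=
    Nat.sInf_mem (s := {k | ∃ h : k < q, (Γ ⟨k, h⟩).1 = (Γ j).1}) ⟨j, j.2, rfl⟩
  exact ⟨⟨_, hlt⟩, rfl, hfst⟩

lemma exists_fst_eq_of_bsN_pos {i : Fin (n + 1)} (hi : 0 < bsN Γ i) : ∃ j, (Γ j).1 = i := by
  obtain ⟨_, hlt, hfst⟩ := Nat.nonempty_of_pos_sInf hi
  exact ⟨⟨_, hlt⟩, hfst⟩

lemma bsN_ne_bsN_add_one_of_lt (hΓ : Monotone fun j => (Γ j).1) {j : Fin q}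
    (hj : bsN Γ (Γ j).1 < j) (i : Fin (n + 1)) : bsN Γ i ≠ bsN Γ (Γ j).1 + 1 := by
  intro hi
  obtain ⟨j', rfl⟩ := exists_fst_eq_of_bsN_pos (Γ := Γ) (i := i) (by lia)
  obtain ⟨k, hk, hk_fst⟩ := exists_eq_bsN_fst Γ j
  obtain ⟨k', hk', hk'_fst⟩ := exists_eq_bsN_fst Γ j'
  have hkk' : (Γ k).1 ≤ (Γ k').1 := hΓ (by lia)
  have hk'j : (Γ k').1 ≤ (Γ j).1 := hΓ (by lia)
  have h_same_column : (Γ j').1 = (Γ j).1 := by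
    rw [← hk'_fst]
    exact le_antisymm hk'j (hk_fst ▸ hkk')
  rw [h_same_column] at hi
  lia

end FirstVisit

-- For a column `i` that `Γ` never visits, `bsN Γ i` is the junk value `0`.
theorem pullback_not_maximal_general {ι κ : Type*} [Finite κ] {q n r : ℕ}
    {Γ : Fin q → Fin (n + 1) × Fin (r + 1)} (hΓ : Monotone fun j => (Γ j).1)
    {α : ι → Fin (n + 1)} (hα : Function.Injective α)
    {β : κ → Fin q} (hβ : (fun j => (Γ j).1) ⁻¹' range α ⊆ range β)
    (hcard : Nat.card κ + (n + 1) < Nat.card ι + q) :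
    ∃ j, (Γ j).1 ∉ range α ∧ ∀ i, bsN Γ i ≠ bsN Γ (Γ j).1 + 1 := by
  obtain ⟨j, j', hlt, heq, hj⟩ := exists_lt_map_eq_notMem_range hα hβ (by simpa using hcard)
  have hfirst : bsN Γ (Γ j').1 < j' := heq ▸ (bsN_fst_le Γ j).trans_lt hlt
  exact ⟨j', heq ▸ hj, bsN_ne_bsN_add_one_of_lt hΓ hfirst⟩

/-- Let `Γ₁ : [n+r] → [n] × [r]` be a maximal chain,
`α : [m] → [n]` an injective monotone map, and let `Γ₂ : [p] → [m] × [r]`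
and `β : [p] → [n+r]` be monotone maps forming a pullback square over
`α × id` and `Γ₁`.  If `p < m + r` (i.e. `Γ₂` is not maximal), then there
exists `l ∈ [n]` with `l ∉ Im(α)` such that `bs_{Γ₁}(l) + 1 ∉ Im(bs_{Γ₁})`. -/
theorem pullback_not_maximal (n r m p : ℕ) (hp : p < m + r)
    (Γ₁ : Fin (n + r + 1) → Fin (n + 1) × Fin (r + 1))
    (hΓ₁mono : Monotone Γ₁) (hΓ₁inj : Function.Injective Γ₁)
    (α : Fin (m + 1) → Fin (n + 1)) (hαmono : Monotone α)
    (hαinj : Function.Injective α)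
    (Γ₂ : Fin (p + 1) → Fin (m + 1) × Fin (r + 1)) (hΓ₂mono : Monotone Γ₂)
    (β : Fin (p + 1) → Fin (n + r + 1)) (hβmono : Monotone β)
    (hcomm : ∀ k, (α (Γ₂ k).1, (Γ₂ k).2) = Γ₁ (β k))
    (hpull : ∀ (x : Fin (m + 1) × Fin (r + 1)) (y : Fin (n + r + 1)),
      (α x.1, x.2) = Γ₁ y → ∃! k : Fin (p + 1), Γ₂ k = x ∧ β k = y) :
    ∃ l : Fin (n + 1), (∀ i : Fin (m + 1), α i ≠ l) ∧
      ∀ l' : Fin (n + 1), bsN Γ₁ l' ≠ bsN Γ₁ l + 1 := by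
  have hβ : (fun j => (Γ₁ j).1) ⁻¹' range α ⊆ range β := by
    rintro y ⟨i, hi⟩
    obtain ⟨k, ⟨-, hk⟩, -⟩ := hpull (i, (Γ₁ y).2) y (Prod.ext hi rfl)
    exact ⟨k, hk⟩
  obtain ⟨j, hj, hbs⟩ := pullback_not_maximal_general (monotone_fst.comp hΓ₁mono) hαinj hβ
    (by simp only [Nat.card_fin]; lia)
  exact ⟨(Γ₁ j).1, fun i hi => hj ⟨i, hi⟩, hbs⟩
end

section
/- Let Γ : [n+r] → [n] × [r] be a maximal chain and α : [m] → [n] an injective monotone map. Then the pullback poset P := { (x, y) ∈ ([m] × [r]) × [n+r] | (α(x.fst), x.snd) = Γ(y) }, with the componentwise order, is totally ordered: for all (x₁,y₁), (x₂,y₂) ∈ P, either (x₁ ≤ x₂ and y₁ ≤ y₂) or (x₂ ≤ x₁ and y₂ ≤ y₁). Equivalently, if x₁, x₂ ∈ [m] × [r] are such that both (α(x₁.fst), x₁.snd) and (α(x₂.fst), x₂.snd) lie in the image of Γ, then x₁ ≤ x₂ or x₂ ≤ x₁. -/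
theorem prodMap_id_le_prodMap_id_iff {A B C : Type*} [LinearOrder A] [Preorder B] [LE C]
    {α : A → B} (hα : StrictMono α) {a b : A × C} :
    Prod.map α id a ≤ Prod.map α id b ↔ a ≤ b :=
  and_congr_left' hα.le_iff_le

section Pullback

variable {ι P Q : Type*} [Preorder P] [LE Q] {g : Q → P} {f : ι → P}

theorem pullback_le_iff_snd_le [Preorder ι] (hf : Monotone f)
    (hg : ∀ ⦃a b : Q⦄, g a ≤ g b → a ≤ b) {p q : g.Pullback f} :
    p ≤ q ↔ p.snd ≤ q.snd := by
  refine ⟨fun hpq ↦ hpq.2, fun hsnd ↦ ⟨hg ?_, hsnd⟩⟩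
  calc
    g p.fst = f p.snd := p.2
    _ ≤ f q.snd := hf hsnd
    _ = g q.fst := q.2.symm

theorem pullback_totally_ordered_general [LinearOrder ι] (hf : Monotone f)
    (hg : ∀ ⦃a b : Q⦄, g a ≤ g b → a ≤ b) :
    Std.Total (α := g.Pullback f) (· ≤ ·) where
  total p q := by
    simpa only [pullback_le_iff_snd_le hf hg] using le_total p.snd q.snd

end Pullback

/-- Let `Γ : [n+r] → [n] × [r]` be a maximal chain and
`α : [m] → [n]` an injective monotone map.  Then the pullback poset
`P := { (x, y) | (α(x.fst), x.snd) = Γ(y) }`, with the componentwise order,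
is totally ordered. -/
theorem pullback_totally_ordered (n r m : ℕ)
    (Γ : Fin (n + r + 1) → Fin (n + 1) × Fin (r + 1))
    (hΓmono : Monotone Γ) (hΓinj : Function.Injective Γ)
    (α : Fin (m + 1) → Fin (n + 1)) (hαmono : Monotone α)
    (hαinj : Function.Injective α) :
    ∀ z₁ z₂ : (Fin (m + 1) × Fin (r + 1)) × Fin (n + r + 1),
      (α z₁.1.1, z₁.1.2) = Γ z₁.2 → (α z₂.1.1, z₂.1.2) = Γ z₂.2 →
      z₁ ≤ z₂ ∨ z₂ ≤ z₁ := by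
  intro z₁ z₂ h₁ h₂
  have hα := hαmono.strictMono_of_injective hαinj
  exact (pullback_totally_ordered_general hΓmono fun _ _ ↦
    (prodMap_id_le_prodMap_id_iff hα).1).total ⟨z₁, h₁⟩ ⟨z₂, h₂⟩
end

section
/- Let r ≥ 1, let Γ : [n+r] → [n] × [r] be a maximal chain, and let v ∈ [n+r] be such that (Γ k).snd ≠ (Γ v).snd for every k ≠ v (i.e., the second-coordinate value of Γ at v is attained only at v). Then there exists a unique pair (Γ_v, h) consisting of a maximal chain Γ_v : [n+r−1] → [n] × [r−1] and an element h ∈ [r] such that Γ(δ_v(k)) = ((Γ_v k).fst, δ_h((Γ_v k).snd)) for all k ∈ [n+r−1]; moreover necessarily h = (Γ v).snd. -/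
/-
Once the second coordinate of `Γ` is surjective, a factorization of `Γ ∘ δ_v` through `id × δ_h` can
only have `h = (Γ v).snd`, because the second coordinate misses `h` away from `v`. For a maximal
chain it is surjective: if it missed a value, the chain would lie in a copy of `[n] × [r - 1]`,
where the sum of the coordinates takes only `n + r` values, while it would have to increase strictly
along the `n + r + 1` points of the chain.
-/

section SndSuccAbove

variable {ι α : Type*} [Preorder α] {r : ℕ}

/-- The embedding `id × δ_h : α × [r - 1] → α × [r]`, through which the chains avoiding the height
`h` factor. -/
def sndSuccAbove (h : Fin (r + 1)) : α × Fin r ↪o α × Fin (r + 1) where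
  toFun := Prod.map id h.succAbove
  inj' := Function.injective_id.prodMap h.succAbove_right_injective
  map_rel_iff' := and_congr_right' h.succAboveOrderEmb.le_iff_le

theorem snd_sndSuccAbove_ne (h : Fin (r + 1)) (x : α × Fin r) : (sndSuccAbove h x).2 ≠ h :=
  h.succAbove_ne x.2

theorem exists_eq_sndSuccAbove_comp {f : ι → α × Fin (r + 1)} {h : Fin (r + 1)}
    (hf : ∀ i, (f i).2 ≠ h) : ∃ g : ι → α × Fin r, f = sndSuccAbove h ∘ g := by
  choose j hj using fun i => Fin.exists_succAbove_eq (hf i)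
  exact ⟨fun i => ((f i).1, j i), funext fun i => Prod.ext rfl (hj i).symm⟩

theorem eq_snd_of_comp_succAbove_eq {m : ℕ} {Γ : Fin (m + 1) → α × Fin (r + 1)}
    (hΓ : Function.Surjective fun k => (Γ k).2) {v : Fin (m + 1)} {h : Fin (r + 1)}
    {g : Fin m → α × Fin r} (hg : Γ ∘ v.succAbove = sndSuccAbove h ∘ g) : h = (Γ v).2 := by
  obtain ⟨k, rfl⟩ := hΓ h
  suffices k = v by rw [this]
  by_contra hkv
  obtain ⟨j, rfl⟩ := Fin.exists_succAbove_eq hkv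
  exact snd_sndSuccAbove_ne _ (g j) (congrArg Prod.snd (congrFun hg j)).symm

end SndSuccAbove

theorem le_add_sub_one_of_strictMono {m a b : ℕ} {f : Fin m → Fin a × Fin b}
    (hf : StrictMono f) : m ≤ a + b - 1 := by
  let coordSum (i : Fin m) : Fin (a + b - 1) := ⟨(f i).1 + (f i).2, by omega⟩
  have hsum : StrictMono coordSum := by
    intro i j hij
    rcases Prod.lt_iff.1 (hf hij) with ⟨hlt, hle⟩ | ⟨hle, hlt⟩
    · exact Nat.add_lt_add_of_lt_of_le hlt hle
    · exact Nat.add_lt_add_of_le_of_lt hle hlt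
  exact Fin.le_of_injective coordSum hsum.injective

theorem snd_surjective_of_strictMono {n r : ℕ} {Γ : Fin (n + r + 1) → Fin (n + 1) × Fin (r + 1)}
    (hΓ : StrictMono Γ) : Function.Surjective fun k => (Γ k).2 := by
  intro h
  by_contra! hmiss
  obtain ⟨g, rfl⟩ := exists_eq_sndSuccAbove_comp hmiss
  have hg : StrictMono g := fun _ _ hij => (sndSuccAbove h).lt_iff_lt.1 (hΓ hij)
  have hcard := le_add_sub_one_of_strictMono hg
  omega

theorem degenerate_coordinate_factor_general {α : Type*} [Preorder α] {m r : ℕ}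
    {Γ : Fin (m + 1) → α × Fin (r + 1)} (hΓmono : Monotone Γ) (hΓinj : Function.Injective Γ)
    (hΓsurj : Function.Surjective fun k => (Γ k).2) {v : Fin (m + 1)}
    (hv : ∀ k, k ≠ v → (Γ k).2 ≠ (Γ v).2) :
    (∃! P : (Fin m → α × Fin r) × Fin (r + 1),
      Monotone P.1 ∧ Function.Injective P.1 ∧
      ∀ k : Fin m, Γ (v.succAbove k) = ((P.1 k).1, P.2.succAbove (P.1 k).2)) ∧
    (∀ P : (Fin m → α × Fin r) × Fin (r + 1),
      (Monotone P.1 ∧ Function.Injective P.1 ∧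
       ∀ k : Fin m, Γ (v.succAbove k) = ((P.1 k).1, P.2.succAbove (P.1 k).2)) →
      P.2 = (Γ v).2) := by
  obtain ⟨g, hg⟩ : ∃ g, Γ ∘ v.succAbove = sndSuccAbove (Γ v).2 ∘ g :=
    exists_eq_sndSuccAbove_comp fun k => hv _ (v.succAbove_ne k)
  have hmono : Monotone (sndSuccAbove (Γ v).2 ∘ g) :=
    hg ▸ hΓmono.comp v.strictMono_succAbove.monotone
  have hinj : Function.Injective (sndSuccAbove (Γ v).2 ∘ g) :=
    hg ▸ hΓinj.comp v.succAbove_right_injective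
  have hsnd {P : (Fin m → α × Fin r) × Fin (r + 1)}
      (hP : ∀ k, Γ (v.succAbove k) = ((P.1 k).1, P.2.succAbove (P.1 k).2)) : P.2 = (Γ v).2 :=
    eq_snd_of_comp_succAbove_eq hΓsurj (funext hP)
  refine ⟨⟨(g, (Γ v).2), ⟨?_, hinj.of_comp, congrFun hg⟩, ?_⟩, fun P hP => hsnd hP.2.2⟩
  · exact fun _ _ hij => (sndSuccAbove _).le_iff_le.1 (hmono hij)
  · rintro ⟨g', h⟩ ⟨-, -, hg'⟩
    obtain rfl : h = (Γ v).2 := hsnd hg'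
    have hgg' : g' = g := (sndSuccAbove _).injective.comp_left ((funext hg').symm.trans hg)
    rw [hgg']

/-- Let `r ≥ 1`, let `Γ : [n+r] → [n] × [r]` be a maximal chain,
and let `v ∈ [n+r]` be such that the second-coordinate value of `Γ` at `v` is
attained only at `v`.  Then there exists a unique pair `(Γ_v, h)` consisting
of a maximal chain `Γ_v : [n+r−1] → [n] × [r−1]` and an element `h ∈ [r]`
such that `Γ(δ_v(k)) = ((Γ_v k).fst, δ_h((Γ_v k).snd))` for all `k`;
moreover necessarily `h = (Γ v).snd`. -/
theorem degenerate_coordinate_factor (n r : ℕ) (hr : 1 ≤ r)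
    (Γ : Fin (n + r + 1) → Fin (n + 1) × Fin (r + 1))
    (hΓmono : Monotone Γ) (hΓinj : Function.Injective Γ)
    (v : Fin (n + r + 1))
    (hv : ∀ k : Fin (n + r + 1), k ≠ v → (Γ k).2 ≠ (Γ v).2) :
    (∃! P : (Fin (n + r) → Fin (n + 1) × Fin r) × Fin (r + 1),
      Monotone P.1 ∧ Function.Injective P.1 ∧
      ∀ k : Fin (n + r),
        Γ (v.succAbove k) = ((P.1 k).1, P.2.succAbove (P.1 k).2)) ∧
    (∀ P : (Fin (n + r) → Fin (n + 1) × Fin r) × Fin (r + 1),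
      (Monotone P.1 ∧ Function.Injective P.1 ∧
       ∀ k : Fin (n + r),
         Γ (v.succAbove k) = ((P.1 k).1, P.2.succAbove (P.1 k).2)) →
      P.2 = (Γ v).2) :=
  degenerate_coordinate_factor_general hΓmono hΓinj
    (snd_surjective_of_strictMono (hΓmono.strictMono_of_injective hΓinj)) hv
end

section
/- Let Γ : [n+r] → [n] × [r] be a maximal chain and let v ∈ [n+r] with 0 < v < n+r be such that Γ(v+1) = ((Γ(v−1)).fst + 1, (Γ(v−1)).snd + 1). Then there exists exactly one maximal chain Γ' : [n+r] → [n] × [r] with Γ' ≠ Γ and Γ ∘ δ_v = Γ' ∘ δ_v. Explicitly, Γ'(k) = Γ(k) for k ≠ v, and Γ'(v) = ((Γ(v−1)).fst + 1, (Γ(v−1)).snd) if Γ(v) = ((Γ(v−1)).fst, (Γ(v−1)).snd + 1), while Γ'(v) = ((Γ(v−1)).fst, (Γ(v−1)).snd + 1) if Γ(v) = ((Γ(v−1)).fst + 1, (Γ(v−1)).snd). -/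
/-!
Changing a strictly monotone `Γ` at a single index `m`, with immediate neighbours `p ⋖ m ⋖ q`,
keeps it strictly monotone exactly when the new value lies in the open interval between `Γ p` and
`Γ q`. If both coordinates of `Γ p` are covered by those of `Γ q`, this interval consists of the
two other corners of a unit square: `Γ m` is one of them, so the only alternative is to move to the
other.
-/

open Set Function

/-- `IsFlipAt Γ m Γ'` says that the chain `Γ'` is a flip of `Γ` at the vertex `m`: the two differ,
but only at `m`. Chains are encoded as strictly monotone maps, and the condition
`Γ ∘ δ_m = Γ' ∘ δ_m` as agreement away from `m`, so that no indexing by `Fin` is required. -/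
structure IsFlipAt {ι α : Type*} [Preorder ι] [Preorder α] (Γ : ι → α) (m : ι) (Γ' : ι → α) :
    Prop where
  strictMono : StrictMono Γ'
  ne : Γ' ≠ Γ
  apply_of_ne : ∀ k ≠ m, Γ' k = Γ k

section Preorder

variable {ι α : Type*} [LinearOrder ι] [Preorder α] {Γ Γ' : ι → α} {p m q : ι} {x y : α}

theorem strictMono_update_iff (hΓ : StrictMono Γ) (hpm : p ⋖ m) (hmq : m ⋖ q) :
    StrictMono (update Γ m y) ↔ y ∈ Ioo (Γ p) (Γ q) := by
  refine ⟨fun h ↦ ⟨?_, ?_⟩, fun hy i j hij ↦ ?_⟩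
  · simpa [hpm.ne] using h hpm.lt
  · simpa [hmq.ne'] using h hmq.lt
  · rcases eq_or_ne i m with rfl | hi
    · rw [update_self, update_of_ne hij.ne']
      exact hy.2.trans_le (hΓ.monotone (hmq.ge_of_gt hij))
    rcases eq_or_ne j m with rfl | hj
    · rw [update_self, update_of_ne hij.ne]
      exact (hΓ.monotone (hpm.le_of_lt hij)).trans_lt hy.1
    · simpa [hi, hj] using hΓ hij

theorem isFlipAt_iff_eq_update (hΓ : StrictMono Γ) (hpm : p ⋖ m) (hmq : m ⋖ q)
    (hIoo : Ioo (Γ p) (Γ q) = {Γ m, y}) (hy : y ≠ Γ m) :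
    IsFlipAt Γ m Γ' ↔ Γ' = update Γ m y := by
  constructor
  · intro h
    have h_update : Γ' = update Γ m (Γ' m) := eq_update_iff.2 ⟨rfl, h.apply_of_ne⟩
    have h_mem : Γ' m ∈ ({Γ m, y} : Set α) := by
      rw [← hIoo, ← strictMono_update_iff hΓ hpm hmq, ← h_update]
      exact h.strictMono
    have h_ne : Γ' m ≠ Γ m := fun hm ↦ h.ne (by rwa [hm, update_eq_self] at h_update)
    rwa [h_mem.resolve_left h_ne] at h_update
  · rintro rfl
    exact ⟨(strictMono_update_iff hΓ hpm hmq).2 (by simp [hIoo]), by simpa using hy,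
      fun k hk ↦ update_of_ne hk y Γ⟩

theorem IsFlipAt.apply_eq (h : IsFlipAt Γ m Γ') (hΓ : StrictMono Γ) (hpm : p ⋖ m) (hmq : m ⋖ q)
    (hIoo : Ioo (Γ p) (Γ q) = {Γ m, y}) (hy : y ≠ Γ m) : Γ' m = y := by
  rw [(isFlipAt_iff_eq_update hΓ hpm hmq hIoo hy).1 h, update_self]

theorem existsUnique_isFlipAt (hΓ : StrictMono Γ) (hpm : p ⋖ m) (hmq : m ⋖ q)
    (hIoo : Ioo (Γ p) (Γ q) = {x, y}) (hxy : x ≠ y) : ∃! Γ', IsFlipAt Γ m Γ' := by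
  wlog hm : Γ m = x generalizing x y
  · have h_mem : Γ m ∈ ({x, y} : Set α) := hIoo ▸ ⟨hΓ hpm.lt, hΓ hmq.lt⟩
    exact this (hIoo.trans (pair_comm x y)) hxy.symm (h_mem.resolve_left hm)
  subst hm
  simp only [isFlipAt_iff_eq_update hΓ hpm hmq hIoo hxy.symm, existsUnique_eq]

end Preorder

theorem Ioo_prod_eq_pair_of_covBy {α β : Type*} [PartialOrder α] [PartialOrder β] {x y : α × β}
    (h₁ : x.1 ⋖ y.1) (h₂ : x.2 ⋖ y.2) : Ioo x y = {(x.1, y.2), (y.1, x.2)} := by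
  have h_Icc : Icc x y = {x.1, y.1} ×ˢ {x.2, y.2} := by
    rw [← h₁.Icc_eq, ← h₂.Icc_eq, Icc_prod_eq]
  rw [← Icc_sdiff_both, h_Icc]
  ext ⟨a, b⟩
  have := h₁.ne
  have := h₂.ne
  simp only [mem_sdiff, mem_prod, mem_insert_iff, mem_singleton_iff, Prod.ext_iff]
  grind

theorem fin_covBy_of_val_eq_add_one {N : ℕ} {a b : Fin N} (h : (b : ℕ) = a + 1) : a ⋖ b :=
  Fin.covBy_iff.2 (Nat.covBy_iff_add_one_eq.2 h.symm)

theorem isFlipAt_iff_succAbove {N : ℕ} {α : Type*} [PartialOrder α] {Γ Γ' : Fin (N + 1) → α}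
    {m : Fin (N + 1)} :
    IsFlipAt Γ m Γ' ↔ Monotone Γ' ∧ Injective Γ' ∧ Γ' ≠ Γ ∧
      ∀ k : Fin N, Γ' (m.succAbove k) = Γ (m.succAbove k) := by
  have h_agree : (∀ k ≠ m, Γ' k = Γ k) ↔ ∀ k, Γ' (m.succAbove k) = Γ (m.succAbove k) := by
    simp [Fin.forall_iff_succAbove m]
  rw [← h_agree]
  exact ⟨fun h ↦ ⟨h.strictMono.monotone, h.strictMono.injective, h.ne, h.apply_of_ne⟩,
    fun ⟨h_mono, h_inj, h_ne, h⟩ ↦ ⟨h_mono.strictMono_of_injective h_inj, h_ne, h⟩⟩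

theorem flip_at_inner_vertex_general {ι α β : Type*} [LinearOrder ι] [PartialOrder α]
    [PartialOrder β] {Γ : ι → α × β} (hΓ : StrictMono Γ) {p m q : ι} (hpm : p ⋖ m) (hmq : m ⋖ q)
    (h₁ : (Γ p).1 ⋖ (Γ q).1) (h₂ : (Γ p).2 ⋖ (Γ q).2) :
    (∃! Γ', IsFlipAt Γ m Γ') ∧
    ∀ Γ', IsFlipAt Γ m Γ' →
      (∀ k ≠ m, Γ' k = Γ k) ∧
      (Γ m = ((Γ p).1, (Γ q).2) → Γ' m = ((Γ q).1, (Γ p).2)) ∧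
      (Γ m = ((Γ q).1, (Γ p).2) → Γ' m = ((Γ p).1, (Γ q).2)) := by
  have hIoo := Ioo_prod_eq_pair_of_covBy h₁ h₂
  have h_ne : ((Γ p).1, (Γ q).2) ≠ ((Γ q).1, (Γ p).2) := fun h ↦ h₁.ne (Prod.mk.inj h).1
  refine ⟨existsUnique_isFlipAt hΓ hpm hmq hIoo h_ne,
    fun Γ' h ↦ ⟨h.apply_of_ne, fun hm ↦ ?_, fun hm ↦ ?_⟩⟩
  · exact h.apply_eq hΓ hpm hmq (by rw [hIoo, hm]) (hm ▸ h_ne.symm)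
  · exact h.apply_eq hΓ hpm hmq (by rw [hIoo, hm, pair_comm]) (hm ▸ h_ne)

/-- Let `Γ : [n+r] → [n] × [r]` be a maximal chain and let
`v ∈ [n+r]` with `0 < v < n+r` be such that
`Γ(v+1) = ((Γ(v−1)).fst + 1, (Γ(v−1)).snd + 1)`.  Then there exists exactly
one maximal chain `Γ'` with `Γ' ≠ Γ` and `Γ ∘ δ_v = Γ' ∘ δ_v`.  Explicitly,
`Γ'(k) = Γ(k)` for `k ≠ v`, and `Γ'(v) = ((Γ(v−1)).fst + 1, (Γ(v−1)).snd)`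
if `Γ(v) = ((Γ(v−1)).fst, (Γ(v−1)).snd + 1)`, while
`Γ'(v) = ((Γ(v−1)).fst, (Γ(v−1)).snd + 1)` if
`Γ(v) = ((Γ(v−1)).fst + 1, (Γ(v−1)).snd)`. -/
theorem flip_at_inner_vertex (n r : ℕ)
    (Γ : Fin (n + r + 1) → Fin (n + 1) × Fin (r + 1))
    (hΓmono : Monotone Γ) (hΓinj : Function.Injective Γ)
    (v : ℕ) (hv0 : 0 < v) (hv1 : v < n + r)
    (hstep1 : ((Γ ⟨v + 1, by omega⟩).1 : ℕ) = ((Γ ⟨v - 1, by omega⟩).1 : ℕ) + 1)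
    (hstep2 : ((Γ ⟨v + 1, by omega⟩).2 : ℕ) = ((Γ ⟨v - 1, by omega⟩).2 : ℕ) + 1) :
    (∃! Γ' : Fin (n + r + 1) → Fin (n + 1) × Fin (r + 1),
      Monotone Γ' ∧ Function.Injective Γ' ∧ Γ' ≠ Γ ∧
      ∀ k : Fin (n + r),
        Γ' ((⟨v, by omega⟩ : Fin (n + r + 1)).succAbove k) =
        Γ ((⟨v, by omega⟩ : Fin (n + r + 1)).succAbove k)) ∧
    (∀ Γ' : Fin (n + r + 1) → Fin (n + 1) × Fin (r + 1),
      (Monotone Γ' ∧ Function.Injective Γ' ∧ Γ' ≠ Γ ∧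
       ∀ k : Fin (n + r),
         Γ' ((⟨v, by omega⟩ : Fin (n + r + 1)).succAbove k) =
         Γ ((⟨v, by omega⟩ : Fin (n + r + 1)).succAbove k)) →
      ((∀ k : Fin (n + r + 1), k ≠ ⟨v, by omega⟩ → Γ' k = Γ k) ∧
       ((((Γ ⟨v, by omega⟩).1 : ℕ) = ((Γ ⟨v - 1, by omega⟩).1 : ℕ) ∧
         ((Γ ⟨v, by omega⟩).2 : ℕ) = ((Γ ⟨v - 1, by omega⟩).2 : ℕ) + 1) →
         (((Γ' ⟨v, by omega⟩).1 : ℕ) = ((Γ ⟨v - 1, by omega⟩).1 : ℕ) + 1 ∧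
          ((Γ' ⟨v, by omega⟩).2 : ℕ) = ((Γ ⟨v - 1, by omega⟩).2 : ℕ))) ∧
       ((((Γ ⟨v, by omega⟩).1 : ℕ) = ((Γ ⟨v - 1, by omega⟩).1 : ℕ) + 1 ∧
         ((Γ ⟨v, by omega⟩).2 : ℕ) = ((Γ ⟨v - 1, by omega⟩).2 : ℕ)) →
         (((Γ' ⟨v, by omega⟩).1 : ℕ) = ((Γ ⟨v - 1, by omega⟩).1 : ℕ) ∧
          ((Γ' ⟨v, by omega⟩).2 : ℕ) = ((Γ ⟨v - 1, by omega⟩).2 : ℕ) + 1)))) := by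
  have hpm : (⟨v - 1, by omega⟩ : Fin (n + r + 1)) ⋖ ⟨v, by omega⟩ :=
    fin_covBy_of_val_eq_add_one (Nat.sub_add_cancel hv0).symm
  have hmq : (⟨v, by omega⟩ : Fin (n + r + 1)) ⋖ ⟨v + 1, by omega⟩ :=
    fin_covBy_of_val_eq_add_one rfl
  simpa only [isFlipAt_iff_succAbove, Prod.ext_iff, Fin.ext_iff, hstep1, hstep2] using
    flip_at_inner_vertex_general (hΓmono.strictMono_of_injective hΓinj) hpm hmq
      (fin_covBy_of_val_eq_add_one hstep1) (fin_covBy_of_val_eq_add_one hstep2)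
end

section
/- Let σ be an index type, let i, j, k ∈ σ with j ≠ k, and let f ∈ ℚ[x_s : s ∈ σ] be a polynomial in which the variable x_j does not occur (j ∉ f.vars). Then ∂_j ( ∫_{x_j}^{x_k} f dx_i ) = − ε_{i,x_j}(f). -/
open MvPolynomial

/-- The ℚ-linear antiderivative in the variable `x_i`: each monomial `m` is
sent to `(x_i · m)/(k+1)` where `k` is the exponent of `x_i` in `m`. -/
noncomputable def antideriv {σ : Type*} [DecidableEq σ] (i : σ)
    (f : MvPolynomial σ ℚ) : MvPolynomial σ ℚ :=
  f.support.sum fun m =>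
    monomial (m + Finsupp.single i 1) (f.coeff m / ((m i : ℚ) + 1))

/-- The ℚ-algebra endomorphism `ε_{i,t}` substituting `x_i ↦ t` and fixing
all other variables. -/
noncomputable def subst {σ : Type*} [DecidableEq σ] (i : σ)
    (t : MvPolynomial σ ℚ) : MvPolynomial σ ℚ →ₐ[ℚ] MvPolynomial σ ℚ :=
  aeval fun s => if s = i then t else X s

/-- The definite integral `∫_a^b f dx_i := ε_{i,b}(A_i f) − ε_{i,a}(A_i f)`. -/
noncomputable def integ {σ : Type*} [DecidableEq σ] (i : σ)
    (a b f : MvPolynomial σ ℚ) : MvPolynomial σ ℚ :=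
  subst i b (antideriv i f) - subst i a (antideriv i f)

/-!
By the fundamental theorem of calculus `∂_i A_i f = f`, by the commutation `∂_j A_i = A_i ∂_j` for
`j ≠ i`, and by the chain rule for `ε_{i,t}`, the definite integral satisfies the Leibniz rule
`∂_j ∫_a^b f dx_i = ε_{i,b}(f) ∂_j b − ε_{i,a}(f) ∂_j a + ∫_a^b ∂_j f dx_i`, whose last term is
absent when `j = i`. At `a = x_j`, `b = x_k` only the contribution of the lower bound survives.
-/

section

variable {σ : Type*} [DecidableEq σ]

theorem antideriv_zero (i : σ) : antideriv i 0 = 0 := by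
  simp [antideriv]

theorem antideriv_eq_sum (i : σ) (f : MvPolynomial σ ℚ) :
    antideriv i f = (AddMonoidAlgebra.coeff f).sum fun m c =>
      monomial (m + Finsupp.single i 1) (c / ((m i : ℚ) + 1)) := by
  rw [antideriv, sum_def]

theorem antideriv_monomial (i : σ) (m : σ →₀ ℕ) (c : ℚ) :
    antideriv i (monomial m c) = monomial (m + Finsupp.single i 1) (c / ((m i : ℚ) + 1)) :=
  (antideriv_eq_sum i _).trans (sum_monomial_eq (by simp))

theorem antideriv_add (i : σ) (f g : MvPolynomial σ ℚ) :
    antideriv i (f + g) = antideriv i f + antideriv i g := by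
  simp only [antideriv_eq_sum, AddMonoidAlgebra.coeff_add]
  exact Finsupp.sum_add_index' (by simp) (by simp [add_div])

theorem pderiv_antideriv_self (i : σ) (f : MvPolynomial σ ℚ) :
    pderiv i (antideriv i f) = f := by
  induction f using MvPolynomial.induction_on' with
  | monomial m c =>
    have hm : (m i : ℚ) + 1 ≠ 0 := by positivity
    simp [antideriv_monomial, pderiv_monomial, div_mul_cancel₀ c hm]
  | add f g hf hg => rw [antideriv_add, map_add, hf, hg]

theorem pderiv_antideriv_of_ne {i j : σ} (hji : j ≠ i) (f : MvPolynomial σ ℚ) :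
    pderiv j (antideriv i f) = antideriv i (pderiv j f) := by
  induction f using MvPolynomial.induction_on' with
  | monomial m c =>
    have exponent_comm : m + Finsupp.single i 1 - Finsupp.single j 1 =
        m - Finsupp.single j 1 + Finsupp.single i 1 := by
      ext s
      rcases eq_or_ne s i with rfl | hs
      · simp [hji]
      · simp [hs.symm]
    simp [antideriv_monomial, pderiv_monomial, exponent_comm, hji, hji.symm, div_mul_eq_mul_div]
  | add f g hf hg => simp only [antideriv_add, map_add, hf, hg]

theorem subst_X_self (i : σ) (t : MvPolynomial σ ℚ) : subst i t (X i) = t := by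
  simp [subst]

theorem subst_X_of_ne {i s : σ} (hs : s ≠ i) (t : MvPolynomial σ ℚ) :
    subst i t (X s) = X s := by
  simp [subst, hs]

theorem pderiv_subst_X (i j s : σ) (t : MvPolynomial σ ℚ) :
    pderiv j (subst i t (X s)) =
      subst i t (pderiv i (X s)) * pderiv j t +
        if j = i then 0 else subst i t (pderiv j (X s)) := by
  rcases eq_or_ne s i with rfl | hs
  · by_cases hj : j = s
    · simp [subst_X_self, hj]
    · simp [subst_X_self, hj, pderiv_X_of_ne (Ne.symm hj)]
  · rcases eq_or_ne j s with rfl | hj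
    · simp [subst_X_of_ne hs, pderiv_X_of_ne hs, hs]
    · simp [subst_X_of_ne hs, pderiv_X_of_ne hs, pderiv_X_of_ne hj.symm]

theorem pderiv_subst (i j : σ) (t f : MvPolynomial σ ℚ) :
    pderiv j (subst i t f) =
      subst i t (pderiv i f) * pderiv j t + if j = i then 0 else subst i t (pderiv j f) := by
  induction f using MvPolynomial.induction_on with
  | C c => simp
  | add f g hf hg =>
    simp only [map_add, hf, hg]
    split_ifs <;> ring
  | mul_X f s hf =>
    simp only [map_mul, map_add, Derivation.leibniz, smul_eq_mul, hf, pderiv_subst_X]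
    split_ifs <;> ring

theorem integ_zero (i : σ) (a b : MvPolynomial σ ℚ) : integ i a b 0 = 0 := by
  simp [integ, antideriv_zero]

/-- Leibniz integral rule; when `j = i` the integrand contributes no term: `x_i` is bound by the
integral, so `x_j` enters only through `a` and `b`. -/
theorem pderiv_integ_var_bound_general (i j : σ) (a b f : MvPolynomial σ ℚ) :
    pderiv j (integ i a b f) =
      subst i b f * pderiv j b - subst i a f * pderiv j a +
        if j = i then 0 else integ i a b (pderiv j f) := by
  simp only [integ, map_sub, pderiv_subst, pderiv_antideriv_self]
  split_ifs with hji
  · ring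
  · rw [pderiv_antideriv_of_ne hji]
    ring

end

/-- Let `i, j, k` be variable indices with `j ≠ k`, and let `f`
be a polynomial over `ℚ` in which the variable `x_j` does not occur.  Then
`∂_j ( ∫_{x_j}^{x_k} f dx_i ) = − ε_{i,x_j}(f)`. -/
theorem pderiv_integ_var_bound {σ : Type*} [DecidableEq σ] (i j k : σ)
    (hjk : j ≠ k) (f : MvPolynomial σ ℚ) (hf : j ∉ f.vars) :
    pderiv j (integ i (X j) (X k) f) = - subst i (X j) f := by
  simp [pderiv_integ_var_bound_general, pderiv_X_of_ne hjk.symm,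
    pderiv_eq_zero_of_notMem_vars hf, integ_zero]
end

section
/- Let Γ : [n+r] → [n] × [r] be a maximal chain. Then Im(bs_Γ) ∪ Im(fs_Γ) = [n+r] and Im(bs_Γ) ∩ Im(fs_Γ) = {0}. -/
open Finset

/-- `fs_Γ(i) = min { j | (Γ j).snd ≥ i }` (defined as `0` if the set is empty;
for maximal chains the set is always nonempty). -/
def fs {p n r : ℕ} (Γ : Fin (p + 1) → Fin (n + 1) × Fin (r + 1))
    (i : Fin (r + 1)) : Fin (p + 1) :=
  if h : (univ.filter fun j => i ≤ (Γ j).2).Nonempty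
  then (univ.filter fun j => i ≤ (Γ j).2).min' h else 0

/-!
The rank `x.1 + x.2` is strictly increasing along `Γ` and takes values in `{0, …, n + r}`, so it
equals `j` at `Γ j`. Hence `Γ (k + 1)` covers `Γ k` in the product order, and a cover increases
exactly one coordinate. Now `k + 1` is a value of `bs Γ` (resp. `fs Γ`) exactly when this step
increases the first (resp. second) coordinate, while `0` is always a value of both.
-/

section LeastElement

variable {α : Type*} [LinearOrder α] {s : Finset α} {a d : α}

theorem dite_min'_eq_of_isLeast (ha : IsLeast (s : Set α) a) :
    (if h : s.Nonempty then s.min' h else d) = a := by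
  rw [dif_pos ⟨a, ha.1⟩]
  exact (s.isLeast_min' _).unique ha

theorem isLeast_of_dite_min'_eq (had : a ≠ d)
    (h : (if h : s.Nonempty then s.min' h else d) = a) : IsLeast (s : Set α) a := by
  split_ifs at h with hs
  · exact h ▸ s.isLeast_min' hs
  · exact absurd h.symm had

end LeastElement

section Range

variable {p n r : ℕ} {Γ : Fin (p + 1) → Fin (n + 1) × Fin (r + 1)}

section

variable {j : Fin (p + 1)}

theorem bs_eq_of_isLeast {i : Fin (n + 1)} (h : IsLeast {k | (Γ k).1 = i} j) : bs Γ i = j :=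
  dite_min'_eq_of_isLeast (by simpa using h)

theorem isLeast_of_bs_eq {i : Fin (n + 1)} (hj : j ≠ 0) (h : bs Γ i = j) :
    IsLeast {k | (Γ k).1 = i} j := by
  simpa using isLeast_of_dite_min'_eq hj h

theorem fs_eq_of_isLeast {i : Fin (r + 1)} (h : IsLeast {k | i ≤ (Γ k).2} j) : fs Γ i = j :=
  dite_min'_eq_of_isLeast (by simpa using h)

theorem isLeast_of_fs_eq {i : Fin (r + 1)} (hj : j ≠ 0) (h : fs Γ i = j) :
    IsLeast {k | i ≤ (Γ k).2} j := by
  simpa using isLeast_of_dite_min'_eq hj h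

end

theorem zero_mem_range_bs : 0 ∈ Set.range (bs Γ) :=
  ⟨(Γ 0).1, bs_eq_of_isLeast ⟨rfl, fun _ _ => Fin.zero_le _⟩⟩

theorem zero_mem_range_fs : 0 ∈ Set.range (fs Γ) :=
  ⟨0, fs_eq_of_isLeast ⟨Fin.zero_le _, fun _ _ => Fin.zero_le _⟩⟩

theorem succ_mem_range_bs_iff (hΓ : Monotone Γ) {k : Fin p} :
    k.succ ∈ Set.range (bs Γ) ↔ (Γ k.castSucc).1 < (Γ k.succ).1 := by
  constructor
  · rintro ⟨i, hi⟩
    obtain ⟨hmem, hmin⟩ := isLeast_of_bs_eq k.succ_ne_zero hi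
    have hle : (Γ k.castSucc).1 ≤ (Γ k.succ).1 := (hΓ k.castSucc_lt_succ.le).1
    exact hle.lt_of_ne fun heq => k.castSucc_lt_succ.not_ge (hmin (heq.trans hmem))
  · intro hlt
    refine ⟨(Γ k.succ).1, bs_eq_of_isLeast ⟨rfl, fun l hl => ?_⟩⟩
    by_contra! hlk
    have hle : (Γ l).1 ≤ (Γ k.castSucc).1 := (hΓ (Fin.le_castSucc_iff.2 hlk)).1
    exact (hle.trans_lt hlt).ne hl

theorem succ_mem_range_fs_iff (hΓ : Monotone Γ) {k : Fin p} :
    k.succ ∈ Set.range (fs Γ) ↔ (Γ k.castSucc).2 < (Γ k.succ).2 := by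
  constructor
  · rintro ⟨i, hi⟩
    obtain ⟨hmem, hmin⟩ := isLeast_of_fs_eq k.succ_ne_zero hi
    have hlt : (Γ k.castSucc).2 < i :=
      lt_of_not_ge fun hge => k.castSucc_lt_succ.not_ge (hmin hge)
    exact hlt.trans_le hmem
  · intro hlt
    refine ⟨(Γ k.succ).2, fs_eq_of_isLeast ⟨le_refl (Γ k.succ).2, fun l hl => ?_⟩⟩
    by_contra! hlk
    have hle : (Γ l).2 ≤ (Γ k.castSucc).2 := (hΓ (Fin.le_castSucc_iff.2 hlk)).2
    exact (hle.trans_lt hlt).not_ge hl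

theorem range_bs_union_range_fs (hΓ : StrictMono Γ) :
    Set.range (bs Γ) ∪ Set.range (fs Γ) = Set.univ := by
  refine Set.eq_univ_of_forall (Fin.cases (.inl zero_mem_range_bs) fun k => ?_)
  rw [Set.mem_union, succ_mem_range_bs_iff hΓ.monotone, succ_mem_range_fs_iff hΓ.monotone]
  exact (Prod.lt_iff.1 (hΓ k.castSucc_lt_succ)).imp And.left And.right

theorem range_bs_inter_range_fs (hΓ : ∀ k : Fin p, Γ k.castSucc ⋖ Γ k.succ) :
    Set.range (bs Γ) ∩ Set.range (fs Γ) = {0} := by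
  have hmono : Monotone Γ := Fin.monotone_iff_le_succ.2 fun k => (hΓ k).le
  refine Set.Subset.antisymm (fun j => ?_)
    (Set.singleton_subset_iff.2 ⟨zero_mem_range_bs, zero_mem_range_fs⟩)
  cases j using Fin.cases with
  | zero => exact fun _ => rfl
  | succ k =>
    rw [Set.mem_inter_iff, succ_mem_range_bs_iff hmono, succ_mem_range_fs_iff hmono]
    rintro ⟨hfst, hsnd⟩
    rcases Prod.covBy_iff.1 (hΓ k) with ⟨-, hsnd_eq⟩ | ⟨-, hfst_eq⟩
    · exact absurd hsnd_eq hsnd.ne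
    · exact absurd hfst_eq hfst.ne

end Range

section Rank

theorem strictMono_fst_add_snd_s18 {a b : ℕ} :
    StrictMono fun x : Fin a × Fin b => (x.1 : ℕ) + x.2 := by
  intro x y hxy
  rcases Prod.lt_iff.1 hxy with ⟨hfst, hsnd⟩ | ⟨hfst, hsnd⟩
  · exact add_lt_add_of_lt_of_le hfst hsnd
  · exact add_lt_add_of_le_of_lt hfst hsnd

theorem eq_val_of_strictMono_of_lt {m : ℕ} {f : Fin m → ℕ} (hf : StrictMono f)
    (hlt : ∀ j, f j < m) (j : Fin m) : f j = j := by
  have hg : StrictMono fun j => (⟨f j, hlt j⟩ : Fin m) := hf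
  exact congrArg Fin.val (hg.apply_le.antisymm hg.le_apply)

variable {n r : ℕ} {Γ : Fin (n + r + 1) → Fin (n + 1) × Fin (r + 1)}

theorem fst_add_snd_eq_val (hΓ : StrictMono Γ) (j : Fin (n + r + 1)) :
    ((Γ j).1 : ℕ) + (Γ j).2 = j :=
  eq_val_of_strictMono_of_lt (strictMono_fst_add_snd_s18.comp hΓ)
    (fun k => show ((Γ k).1 : ℕ) + (Γ k).2 < n + r + 1 by omega) j

theorem apply_castSucc_covBy_apply_succ (hΓ : StrictMono Γ) (k : Fin (n + r)) :
    Γ k.castSucc ⋖ Γ k.succ := by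
  refine ⟨hΓ k.castSucc_lt_succ, fun x hx hx' => ?_⟩
  have hlo := strictMono_fst_add_snd_s18 hx
  have hhi := strictMono_fst_add_snd_s18 hx'
  simp only [fst_add_snd_eq_val hΓ, Fin.val_castSucc, Fin.val_succ] at hlo hhi
  omega

end Rank

/-- Let `Γ : [n+r] → [n] × [r]` be a maximal chain.  Then
`Im(bs_Γ) ∪ Im(fs_Γ) = [n+r]` and `Im(bs_Γ) ∩ Im(fs_Γ) = {0}`. -/
theorem range_bs_union_inter_range_fs (n r : ℕ)
    (Γ : Fin (n + r + 1) → Fin (n + 1) × Fin (r + 1))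
    (hmono : Monotone Γ) (hinj : Function.Injective Γ) :
    Set.range (bs Γ) ∪ Set.range (fs Γ) = Set.univ ∧
    Set.range (bs Γ) ∩ Set.range (fs Γ) = {0} := by
  have hΓ : StrictMono Γ := hmono.strictMono_of_injective hinj
  exact ⟨range_bs_union_range_fs hΓ, range_bs_inter_range_fs (apply_castSucc_covBy_apply_succ hΓ)⟩
end
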